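/- For b ≥ 2 and σ a permutation of {0,...,b-1}, let σ''(x) = -σ(x) mod b. Then for all N ≥ 1, D_N(S_b^σ) = D_N(S_b^{σ''}), where D_N denotes the extreme discrepancy of the first N points of the permuted van der Corput sequence. -/

import Mathlib

open scoped Classical

/-- The permuted `b`-adic radical inverse function of Faure. -/
noncomputable def Sperm (b : ℕ) (σ : ℕ → ℕ) (n : ℕ) : ℝ :=
  ∑' j : ℕ, (σ (n / b ^ j % b) : ℝ) / b ^ (j + 1)

/-- Extreme discrepancy of the first `N` points of a sequence in `[0,1)`. -/
noncomputable def disc (N : ℕ) (x : ℕ → ℝ) : ℝ :=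
  ⨆ I : {p : ℝ × ℝ // 0 ≤ p.1 ∧ p.1 < p.2 ∧ p.2 ≤ 1},
    |(((Finset.range N).filter fun i => I.1.1 ≤ x i ∧ x i < I.1.2).card : ℝ) / N
      - (I.1.2 - I.1.1)|

/-!
Let `E(t) = #{i < N : x_i < t} - N t`; the extreme discrepancy is the diameter of `E '' [0, 1]`
divided by `N`. For the permuted van der Corput sequence, once `N ≤ b ^ n` the first `N` points are
a common small translate of the points of the grid `b ^ (-n) ℤ` given by their first `n` digits, so
this diameter is the limit of the diameters of the sets `V_n` of values of `E` taken along the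
grids.

Adding one digit shows that `V_n` is the Minkowski sum, over `j < n`, of the sets
`Φ_j = {φ_h (N / b ^ j) : 1 ≤ h ≤ b}`, where `φ_h` are Faure's functions. Replacing `σ` by
`-σ mod b` turns `φ_h` into `φ_1 - φ_{b + 1 - h}`, hence reflects every `Φ_j`, hence reflects `V_n`,
and the diameter does not change.
-/

open Finset Metric Filter
open scoped Topology Pointwise

section Diam

variable {α : Type*} [PseudoMetricSpace α] {s t : Set α} {ε : ℝ}

theorem diam_le_diam_add_of_forall_exists_dist_le (hε : 0 ≤ ε) (ht : Bornology.IsBounded t)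
    (h : ∀ x ∈ s, ∃ y ∈ t, dist x y ≤ ε) : diam s ≤ diam t + 2 * ε :=
  calc
    diam s ≤ diam (cthickening ε t) := by
      refine diam_mono (fun x hx => ?_) ht.cthickening
      obtain ⟨y, hy, hxy⟩ := h x hx
      exact mem_cthickening_of_dist_le x y ε t hy hxy
    _ ≤ diam t + 2 * ε := diam_cthickening_le t hε

theorem dist_diam_le_of_forall_exists_dist_le (hε : 0 ≤ ε) (hs : Bornology.IsBounded s)
    (ht : Bornology.IsBounded t) (hst : ∀ x ∈ s, ∃ y ∈ t, dist x y ≤ ε)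
    (hts : ∀ y ∈ t, ∃ x ∈ s, dist y x ≤ ε) : dist (diam s) (diam t) ≤ 2 * ε := by
  have h₁ := diam_le_diam_add_of_forall_exists_dist_le hε ht hst
  have h₂ := diam_le_diam_add_of_forall_exists_dist_le hε hs hts
  rw [Real.dist_eq, abs_le]
  constructor <;> linarith

end Diam

section LocalDiscrepancy

/-- The local discrepancy `E(t) = #{i < N : x i < t} - N t` of the first `N` points of `x`, not
divided by `N`. -/
noncomputable def localDisc (N : ℕ) (x : ℕ → ℝ) (t : ℝ) : ℝ :=
  #{i ∈ range N | x i < t} - N * t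

variable {N : ℕ} {x : ℕ → ℝ}

theorem localDisc_sub_localDisc {α β : ℝ} (h : α ≤ β) :
    localDisc N x β - localDisc N x α = #{i ∈ range N | α ≤ x i ∧ x i < β} - N * (β - α) := by
  have hcard : #{i ∈ range N | x i < β}
      = #{i ∈ range N | x i < α} + #{i ∈ range N | α ≤ x i ∧ x i < β} := by
    rw [← card_union_of_disjoint, ← filter_or]
    · congr 1 with i
      grind
    · exact disjoint_filter.2 fun i _ h₁ h₂ => h₁.not_ge h₂.1
  simp only [localDisc, hcard]
  push_cast
  ring

theorem abs_card_div_sub_eq_dist_localDisc (hN : N ≠ 0) {α β : ℝ} (h : α ≤ β) :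
    |(#{i ∈ range N | α ≤ x i ∧ x i < β} : ℝ) / N - (β - α)|
      = dist (localDisc N x α) (localDisc N x β) / N := by
  rw [dist_comm, Real.dist_eq, localDisc_sub_localDisc h, ← Nat.abs_cast N, ← abs_div, Nat.abs_cast]
  congr 1
  field_simp

theorem isBounded_image_localDisc : Bornology.IsBounded (localDisc N x '' Set.Icc 0 1) := by
  refine (Metric.isBounded_Icc (-N : ℝ) N).subset ?_
  rintro _ ⟨t, ⟨ht₀, ht₁⟩, rfl⟩
  have hcard : (#{i ∈ range N | x i < t} : ℝ) ≤ N := by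
    exact_mod_cast (card_filter_le _ _).trans_eq (card_range N)
  rw [localDisc]
  constructor <;> nlinarith [Nat.cast_nonneg (α := ℝ) N,
    Nat.cast_nonneg (α := ℝ) #{i ∈ range N | x i < t}]

theorem disc_eq_diam_div (hN : N ≠ 0) :
    disc N x = diam (localDisc N x '' Set.Icc 0 1) / N := by
  have hN₀ : (0 : ℝ) < N := by positivity
  have hle (I : {p : ℝ × ℝ // 0 ≤ p.1 ∧ p.1 < p.2 ∧ p.2 ≤ 1}) :
      |(#{i ∈ range N | I.1.1 ≤ x i ∧ x i < I.1.2} : ℝ) / N - (I.1.2 - I.1.1)|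
        ≤ diam (localDisc N x '' Set.Icc 0 1) / N := by
    obtain ⟨⟨α, β⟩, hα, hαβ, hβ⟩ := I
    rw [abs_card_div_sub_eq_dist_localDisc hN hαβ.le]
    gcongr
    exact dist_le_diam_of_mem isBounded_image_localDisc
      (Set.mem_image_of_mem _ ⟨hα, hαβ.le.trans hβ⟩) (Set.mem_image_of_mem _ ⟨hα.trans hαβ.le, hβ⟩)
  have hdisc : 0 ≤ disc N x := Real.iSup_nonneg fun _ => abs_nonneg _
  have hdist {α β : ℝ} (hα : 0 ≤ α) (hαβ : α ≤ β) (hβ : β ≤ 1) :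
      dist (localDisc N x α) (localDisc N x β) ≤ disc N x * N := by
    rcases hαβ.eq_or_lt with rfl | hlt
    · rw [dist_self]
      positivity
    · rw [← div_le_iff₀ hN₀, ← abs_card_div_sub_eq_dist_localDisc hN hαβ]
      exact le_ciSup ⟨_, Set.forall_mem_range.2 hle⟩ ⟨(α, β), hα, hlt, hβ⟩
  refine le_antisymm (Real.iSup_le hle (by positivity)) ?_
  rw [div_le_iff₀ hN₀]
  refine diam_le_of_forall_dist_le (by positivity) ?_
  rintro _ ⟨α, hα, rfl⟩ _ ⟨β, hβ, rfl⟩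
  rcases le_total α β with h | h
  · exact hdist hα.1 h hβ.2
  · exact dist_comm (localDisc N x α) _ ▸ hdist hβ.1 h hα.2

end LocalDiscrepancy

section DigitReversal

/-- The integer with base-`b` digits `σ a_0, …, σ a_{n-1}`, most significant first, where
`a_0, a_1, …` are the base-`b` digits of `i`, least significant first. It is `b ^ n` times the
`n`-th partial sum of `Sperm b σ i`. -/
def digitRev (b : ℕ) (σ : ℕ → ℕ) : ℕ → ℕ → ℕ
  | 0, _ => 0
  | n + 1, i => b * digitRev b σ n i + σ (i / b ^ n % b)

variable {b : ℕ} {σ : ℕ → ℕ}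

theorem digitRev_lt (hb : 0 < b) (hσ : Set.MapsTo σ (Set.Iio b) (Set.Iio b)) (n i : ℕ) :
    digitRev b σ n i < b ^ n := by
  induction n with
  | zero => simp [digitRev]
  | succ n ih =>
    have hdigit : σ (i / b ^ n % b) < b := hσ (Nat.mod_lt _ hb)
    rw [digitRev, pow_succ]
    nlinarith

theorem digitRev_eq_digitRev_iff (hb : 0 < b) (hσ : Set.BijOn σ (Set.Iio b) (Set.Iio b))
    {n i j : ℕ} : digitRev b σ n i = digitRev b σ n j ↔ i % b ^ n = j % b ^ n := by
  induction n with
  | zero => simp [digitRev, Nat.mod_one]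
  | succ n ih =>
    have hi : i / b ^ n % b < b := Nat.mod_lt _ hb
    have hj : j / b ^ n % b < b := Nat.mod_lt _ hb
    have hpair {B q r q' r' : ℕ} (hr : r < B) (hr' : r' < B) :
        B * q + r = B * q' + r' ↔ q = q' ∧ r = r' := by
      refine ⟨fun h => ?_, by rintro ⟨rfl, rfl⟩; rfl⟩
      have hq : q = q' := by
        simpa [Nat.mul_add_div (Nat.zero_lt_of_lt hr), Nat.div_eq_of_lt, hr, hr']
          using congrArg (· / B) h
      subst hq
      exact ⟨rfl, Nat.add_left_cancel h⟩
    have hpos : 0 < b ^ n := by positivity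
    rw [digitRev, digitRev, hpair (hσ.mapsTo hi) (hσ.mapsTo hj), ih, hσ.injOn.eq_iff hi hj,
      Nat.mod_pow_succ, Nat.mod_pow_succ, add_comm, add_comm (j % _),
      hpair (Nat.mod_lt i hpos) (Nat.mod_lt j hpos), and_comm]

theorem bijOn_digitRev (hb : 0 < b) (hσ : Set.BijOn σ (Set.Iio b) (Set.Iio b)) (n : ℕ) :
    Set.BijOn (digitRev b σ n) (Set.Iio (b ^ n)) (Set.Iio (b ^ n)) := by
  refine ((Set.finite_Iio _).injOn_iff_bijOn_of_mapsTo
    fun i _ => digitRev_lt hb hσ.mapsTo n i).1 fun i hi j hj h => ?_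
  rwa [digitRev_eq_digitRev_iff hb hσ, Nat.mod_eq_of_lt hi, Nat.mod_eq_of_lt hj] at h

theorem sum_filter_mod_eq {M : Type*} [AddCommMonoid M] {B r : ℕ} (hr : r < B) (N : ℕ)
    (f : ℕ → M) :
    ∑ i ∈ range N with i % B = r, f (i / B)
      = ∑ m ∈ range (N / B), f m + if r < N % B then f (N / B) else 0 := by
  have hB : 0 < B := Nat.zero_lt_of_lt hr
  have hlt (m : ℕ) : r + B * m < N ↔ m < N / B + if r < N % B then 1 else 0 := by
    have hN := Nat.div_add_mod N B
    have hmod := Nat.mod_lt N hB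
    rcases lt_trichotomy m (N / B) with hm | rfl | hm
    · have := Nat.mul_le_mul_left B (Nat.succ_le_of_lt hm)
      rw [Nat.mul_succ] at this
      split_ifs <;> omega
    · split_ifs <;> omega
    · have := Nat.mul_le_mul_left B (Nat.succ_le_of_lt hm)
      rw [Nat.mul_succ] at this
      split_ifs <;> omega
  calc
    ∑ i ∈ range N with i % B = r, f (i / B)
        = ∑ m ∈ range (N / B + if r < N % B then 1 else 0), f m := by
      refine sum_nbij' (· / B) (r + B * ·) ?_ ?_ ?_ ?_ fun _ _ => rfl
      · intro i hi
        obtain ⟨hiN, hir⟩ := mem_filter.1 hi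
        rw [mem_range, ← hlt, ← hir, Nat.mod_add_div]
        exact mem_range.1 hiN
      · intro m hm
        simp [hlt, mem_range.1 hm, Nat.mod_eq_of_lt hr]
      · intro i hi
        rw [← (mem_filter.1 hi).2, Nat.mod_add_div]
      · intro m _
        simp [Nat.add_mul_div_left _ _ hB, Nat.div_eq_of_lt hr]
    _ = ∑ m ∈ range (N / B), f m + if r < N % B then f (N / B) else 0 := by
      split_ifs <;> simp [sum_range_succ]

theorem exists_sum_filter_digitRev_eq (hb : 0 < b) (hσ : Set.BijOn σ (Set.Iio b) (Set.Iio b))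
    (N : ℕ) {n h : ℕ} (hh : h < b ^ n) :
    ∃ ε : ℝ, ∀ f : ℕ → ℝ, ∑ i ∈ range N with digitRev b σ n i = h, f (i / b ^ n)
      = ∑ m ∈ range (N / b ^ n), f m + ε * f (N / b ^ n) := by
  obtain ⟨r, hr, rfl⟩ := (bijOn_digitRev hb hσ n).surjOn hh
  refine ⟨if r < N % b ^ n then 1 else 0, fun f => ?_⟩
  simp only [digitRev_eq_digitRev_iff hb hσ, Nat.mod_eq_of_lt (Set.mem_Iio.1 hr), ite_mul, one_mul,
    zero_mul]
  exact sum_filter_mod_eq hr N f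

end DigitReversal

section FaurePhi

/-- The indicator function of `{m : σ (m mod b) < h}`. -/
def digitLT (b : ℕ) (σ : ℕ → ℕ) (h m : ℕ) : ℝ :=
  if σ (m % b) < h then 1 else 0

/-- Faure's function `φ_h`, the primitive of `y ↦ digitLT b σ h ⌊y⌋ - h / b` vanishing at `0`. -/
noncomputable def faurePhi (b : ℕ) (σ : ℕ → ℕ) (h : ℕ) (y : ℝ) : ℝ :=
  ∑ m ∈ range ⌊y⌋₊, digitLT b σ h m + (y - ⌊y⌋₊) * digitLT b σ h ⌊y⌋₊ - h / b * y

/-- The set `Φ_j = {φ_h (N / b ^ j) : 1 ≤ h ≤ b}` of contributions of the `j`-th digit to the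
discrepancy. -/
def phiValues (b : ℕ) (σ : ℕ → ℕ) (N j : ℕ) : Set ℝ :=
  (fun h => faurePhi b σ h (N / b ^ j)) '' Set.Icc 1 b

variable {b : ℕ} {σ : ℕ → ℕ}

theorem bijOn_sub_mod (b : ℕ) :
    Set.BijOn (fun s => (b - s) % b) (Set.Iio b) (Set.Iio b) := by
  have hmaps : Set.MapsTo (fun s => (b - s) % b) (Set.Iio b) (Set.Iio b) :=
    fun s hs => Nat.mod_lt _ (Nat.zero_lt_of_lt hs)
  have hinv : Set.LeftInvOn (fun s => (b - s) % b) (fun s => (b - s) % b) (Set.Iio b) := by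
    intro s hs
    rcases Nat.eq_zero_or_pos s with rfl | hpos
    · simp
    · have hs : s < b := hs
      simp only
      rw [Nat.mod_eq_of_lt (show b - s < b by omega), Nat.sub_sub_self hs.le, Nat.mod_eq_of_lt hs]
  exact Set.InvOn.bijOn ⟨hinv, hinv⟩ hmaps hmaps

theorem ite_sub_mod_lt {s h : ℕ} (hs : s < b) (hh : h ∈ Set.Icc 1 b) :
    (if (b - s) % b < h then 1 else 0 : ℝ)
      = 1 + (if s < 1 then 1 else 0) - if s < b + 1 - h then 1 else 0 := by
  obtain ⟨h₁, h₂⟩ := hh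
  rcases Nat.eq_zero_or_pos s with rfl | hpos
  · rw [Nat.sub_zero, Nat.mod_self, if_pos (by omega), if_pos (by omega), if_pos (by omega)]
    ring
  · rw [Nat.mod_eq_of_lt (by omega), if_neg (show ¬ s < 1 by omega)]
    by_cases hlt : s < b + 1 - h
    · rw [if_neg (by omega), if_pos hlt]
      ring
    · rw [if_pos (by omega), if_neg hlt]
      ring

theorem digitLT_neg (hb : 0 < b) (hσ : Set.MapsTo σ (Set.Iio b) (Set.Iio b)) {h : ℕ}
    (hh : h ∈ Set.Icc 1 b) (m : ℕ) :
    digitLT b (fun x => (b - σ x) % b) h m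
      = 1 + digitLT b σ 1 m - digitLT b σ (b + 1 - h) m :=
  ite_sub_mod_lt (hσ (Nat.mod_lt m hb)) hh

theorem faurePhi_neg (hb : 0 < b) (hσ : Set.MapsTo σ (Set.Iio b) (Set.Iio b)) {h : ℕ}
    (hh : h ∈ Set.Icc 1 b) (y : ℝ) :
    faurePhi b (fun x => (b - σ x) % b) h y = faurePhi b σ 1 y - faurePhi b σ (b + 1 - h) y := by
  have hcast : ((b + 1 - h : ℕ) : ℝ) = b + 1 - h := by
    rw [Nat.cast_sub (hh.2.trans b.le_succ)]
    push_cast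
    ring
  simp only [faurePhi, digitLT_neg hb hσ hh, sum_sub_distrib, sum_add_distrib, sum_const,
    card_range, nsmul_eq_mul, mul_one, hcast]
  field_simp
  ring

theorem phiValues_neg (hb : 0 < b) (hσ : Set.MapsTo σ (Set.Iio b) (Set.Iio b)) (N j : ℕ) :
    phiValues b (fun x => (b - σ x) % b) N j
      = {faurePhi b σ 1 (N / b ^ j)} - phiValues b σ N j := by
  have hreflect : (b + 1 - ·) '' Set.Icc 1 b = Set.Icc 1 b := by
    ext h
    simp only [Set.mem_image, Set.mem_Icc]
    exact ⟨by rintro ⟨k, hk, rfl⟩; omega, fun hh => ⟨b + 1 - h, by omega, by omega⟩⟩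
  rw [phiValues, Set.image_congr fun h hh => faurePhi_neg hb hσ hh _, Set.singleton_sub, phiValues]
  conv_rhs => rw [← hreflect]
  simp only [Set.image_image]

theorem diam_sum_phiValues_neg (hb : 0 < b) (hσ : Set.MapsTo σ (Set.Iio b) (Set.Iio b))
    (N n : ℕ) :
    diam (∑ j ∈ range n, phiValues b (fun x => (b - σ x) % b) N j)
      = diam (∑ j ∈ range n, phiValues b σ N j) := by
  simp only [phiValues_neg hb hσ, sum_sub_distrib]
  rw [Set.finsetSum_singleton, Set.singleton_sub]
  exact (IsometryEquiv.subLeft (_ : ℝ)).diam_image _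

end FaurePhi

section GridDiscrepancy

/-- The local discrepancy at the grid point `h / b ^ n` of the first `N` points of the permuted
van der Corput sequence truncated to `n` digits. -/
noncomputable def gridDisc (b : ℕ) (σ : ℕ → ℕ) (N n h : ℕ) : ℝ :=
  #{i ∈ range N | digitRev b σ n i < h} - N * h / b ^ n

variable {b : ℕ} {σ : ℕ → ℕ}

theorem gridDisc_zero (N n : ℕ) : gridDisc b σ N n 0 = 0 := by
  simp [gridDisc]

theorem gridDisc_pow (hb : 0 < b) (hσ : Set.MapsTo σ (Set.Iio b) (Set.Iio b)) (N n : ℕ) :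
    gridDisc b σ N n (b ^ n) = 0 := by
  rw [gridDisc, filter_true_of_mem fun i _ => digitRev_lt hb hσ n i, card_range]
  push_cast
  field_simp
  ring

theorem image_gridDisc_Iio (hb : 0 < b) (hσ : Set.MapsTo σ (Set.Iio b) (Set.Iio b)) (N n : ℕ) :
    gridDisc b σ N n '' Set.Iio (b ^ n) = gridDisc b σ N n '' Set.Iic (b ^ n) := by
  refine (Set.image_mono Set.Iio_subset_Iic_self).antisymm ?_
  rintro _ ⟨h, hh, rfl⟩
  rcases (Set.mem_Iic.1 hh).eq_or_lt with rfl | hlt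
  · exact ⟨0, pow_pos hb n, by rw [gridDisc_zero, gridDisc_pow hb hσ]⟩
  · exact ⟨h, hlt, rfl⟩

theorem image_gridDisc_Icc (hb : 0 < b) (hσ : Set.MapsTo σ (Set.Iio b) (Set.Iio b)) (N n : ℕ) :
    gridDisc b σ N n '' Set.Icc 1 (b ^ n) = gridDisc b σ N n '' Set.Iic (b ^ n) := by
  refine (Set.image_mono Set.Icc_subset_Iic_self).antisymm ?_
  rintro _ ⟨h, hh, rfl⟩
  rcases Nat.eq_zero_or_pos h with rfl | hpos
  · exact ⟨b ^ n, ⟨pow_pos hb n, le_rfl⟩, by rw [gridDisc_zero, gridDisc_pow hb hσ]⟩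
  · exact ⟨h, ⟨hpos, hh⟩, rfl⟩

theorem ite_mul_add_lt_mul_add {s k : ℕ} (hs : s < b) (hk : k ≤ b) (t h : ℕ) :
    (if b * t + s < b * h + k then 1 else 0 : ℝ)
      = (if t < h then 1 else 0) + if t = h then if s < k then 1 else 0 else 0 := by
  rcases lt_trichotomy t h with hlt | rfl | hgt
  · have : b * t + s < b * h + k := by nlinarith
    simp [hlt, hlt.ne, this]
  · simp
  · have : ¬ b * t + s < b * h + k := by nlinarith
    simp [hgt.not_gt, hgt.ne', this]

theorem card_filter_digitRev_succ_lt (hb : 0 < b) (hσ : Set.MapsTo σ (Set.Iio b) (Set.Iio b))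
    (N n h : ℕ) {k : ℕ} (hk : k ≤ b) :
    (#{i ∈ range N | digitRev b σ (n + 1) i < b * h + k} : ℝ)
      = #{i ∈ range N | digitRev b σ n i < h}
        + ∑ i ∈ range N with digitRev b σ n i = h, digitLT b σ k (i / b ^ n) := by
  rw [card_filter, card_filter, sum_filter]
  push_cast
  rw [← sum_add_distrib]
  exact sum_congr rfl fun i _ =>
    ite_mul_add_lt_mul_add (hσ (Nat.mod_lt _ hb)) hk (digitRev b σ n i) h

theorem gridDisc_succ (hb : 0 < b) (hσ : Set.BijOn σ (Set.Iio b) (Set.Iio b)) (N : ℕ)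
    {n h k : ℕ} (hh : h < b ^ n) (hk : k ≤ b) :
    gridDisc b σ N (n + 1) (b * h + k) = faurePhi b σ k (N / b ^ n)
      + gridDisc b σ N n (h + if σ (N / b ^ n % b) < k then 1 else 0) := by
  obtain ⟨ε, hε⟩ := exists_sum_filter_digitRev_eq hb hσ N hh
  have hfloor : ⌊(N : ℝ) / b ^ n⌋₊ = N / b ^ n := by
    exact_mod_cast Nat.floor_div_eq_div (K := ℝ) N (b ^ n)
  have hnext : (#{i ∈ range N | digitRev b σ n i < h + 1} : ℝ)
      = #{i ∈ range N | digitRev b σ n i < h} + (N / b ^ n : ℕ) + ε := by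
    have hone := hε fun _ => 1
    simp only [sum_const, card_range, nsmul_eq_mul, mul_one] at hone
    rw [add_assoc, ← hone, filter_congr fun i _ => Nat.lt_succ_iff_lt_or_eq, filter_or,
      card_union_of_disjoint (disjoint_filter.2 fun i _ hlt => hlt.ne)]
    push_cast
    rfl
  rw [gridDisc, card_filter_digitRev_succ_lt hb hσ.mapsTo N n h hk, hε, faurePhi, hfloor, gridDisc]
  by_cases hcarry : σ (N / b ^ n % b) < k
  · simp only [hcarry, if_true, hnext, digitLT]
    push_cast
    field_simp
    ring
  · simp only [hcarry, if_false, add_zero, digitLT]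
    push_cast
    field_simp
    ring

theorem Icc_one_mul_eq_image2 (hb : 0 < b) (B : ℕ) :
    Set.Icc 1 (b * B) = Set.image2 (fun k h => b * h + k) (Set.Icc 1 b) (Set.Iio B) := by
  ext m
  constructor
  · rintro ⟨hm, hmB⟩
    have hdiv := Nat.div_add_mod (m - 1) b
    have hmod := Nat.mod_lt (m - 1) hb
    refine Set.mem_image2.2 ⟨(m - 1) % b + 1, ⟨by omega, by omega⟩, (m - 1) / b, ?_, by omega⟩
    exact Nat.div_lt_of_lt_mul (by omega)
  · rintro ⟨k, ⟨hk, hkb⟩, h, hh, rfl⟩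
    have hh : h + 1 ≤ B := hh
    exact ⟨hk.trans (Nat.le_add_left k _), by nlinarith⟩

theorem image_gridDisc_succ (hb : 0 < b) (hσ : Set.BijOn σ (Set.Iio b) (Set.Iio b)) (N n : ℕ) :
    gridDisc b σ N (n + 1) '' Set.Iic (b ^ (n + 1))
      = gridDisc b σ N n '' Set.Iic (b ^ n) + phiValues b σ N n := by
  have hcarry (k : ℕ) : (fun h => gridDisc b σ N n (h + if σ (N / b ^ n % b) < k then 1 else 0)) ''
      Set.Iio (b ^ n) = gridDisc b σ N n '' Set.Iic (b ^ n) := by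
    split_ifs
    · have hshift : (· + 1) '' Set.Iio (b ^ n) = Set.Icc 1 (b ^ n) := by
        ext h
        simp only [Set.mem_image, Set.mem_Iio, Set.mem_Icc]
        exact ⟨by rintro ⟨k, hk, rfl⟩; omega, fun hh => ⟨h - 1, by omega, by omega⟩⟩
      rw [← image_gridDisc_Icc hb hσ.mapsTo, ← hshift, Set.image_image]
    · exact image_gridDisc_Iio hb hσ.mapsTo N n
  rw [← image_gridDisc_Icc hb hσ.mapsTo, pow_succ', Icc_one_mul_eq_image2 hb, Set.image_image2]
  calc
    _ = ⋃ k ∈ Set.Icc 1 b, (faurePhi b σ k (N / b ^ n) + ·) ''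
          ((fun h => gridDisc b σ N n (h + if σ (N / b ^ n % b) < k then 1 else 0)) ''
            Set.Iio (b ^ n)) := by
      simp only [Set.image_image, Set.iUnion_image_left]
      exact Set.image2_congr fun k hk h hh => gridDisc_succ hb hσ N hh hk.2
    _ = phiValues b σ N n + gridDisc b σ N n '' Set.Iic (b ^ n) := by
      simp only [hcarry, Set.iUnion_image_left, phiValues, ← Set.image2_add, Set.image2_image_left]
    _ = _ := add_comm _ _

theorem image_gridDisc_eq_sum (hb : 0 < b) (hσ : Set.BijOn σ (Set.Iio b) (Set.Iio b)) (N n : ℕ) :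
    gridDisc b σ N n '' Set.Iic (b ^ n) = ∑ j ∈ range n, phiValues b σ N j := by
  induction n with
  | zero =>
    rw [← image_gridDisc_Iio hb hσ.mapsTo]
    simp [gridDisc_zero, Set.singleton_zero]
  | succ n ih => rw [image_gridDisc_succ hb hσ, ih, sum_range_succ]

end GridDiscrepancy

section Limit

variable {b : ℕ} {σ : ℕ → ℕ}

theorem sum_range_div_pow_eq_digitRev (hb : 0 < b) (n i : ℕ) :
    ∑ j ∈ range n, (σ (i / b ^ j % b) : ℝ) / b ^ (j + 1) = digitRev b σ n i / b ^ n := by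
  induction n with
  | zero => simp [digitRev]
  | succ n ih =>
    rw [sum_range_succ, ih, digitRev]
    push_cast
    field_simp
    ring

-- All digits of `i` from the `n`-th on are `0`, so the tail is a geometric series.
theorem sperm_eq_of_lt_pow (hb : 1 < b) {n i : ℕ} (hi : i < b ^ n) :
    Sperm b σ i = (digitRev b σ n i + σ 0 / (b - 1)) / b ^ n := by
  have hb₁ : (1 : ℝ) < b := by exact_mod_cast hb
  have htail : HasSum (fun j : ℕ => (σ (i / b ^ (j + n) % b) : ℝ) / b ^ (j + n + 1))
      (σ 0 / (b - 1) / b ^ n) := by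
    have hterm (j : ℕ) : (σ (i / b ^ (j + n) % b) : ℝ) / b ^ (j + n + 1)
        = σ 0 / b ^ (n + 1) * (b : ℝ)⁻¹ ^ j := by
      have hdiv : i / b ^ (j + n) = 0 := Nat.div_eq_of_lt
        (hi.trans_le (Nat.pow_le_pow_right (by omega) (by omega)))
      rw [hdiv, Nat.zero_mod, add_assoc, pow_add, inv_pow, ← div_eq_mul_inv, div_div, mul_comm]
    have hvalue : (σ 0 : ℝ) / (b - 1) / b ^ n = σ 0 / b ^ (n + 1) * (1 - (b : ℝ)⁻¹)⁻¹ := by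
      have hsub : 1 - (b : ℝ)⁻¹ = (b - 1) / b := by field_simp
      rw [hsub, pow_succ]
      field_simp
    simp only [hterm, hvalue]
    exact (hasSum_geometric_of_lt_one (by positivity) (inv_lt_one_of_one_lt₀ hb₁)).mul_left _
  have hsum := (hasSum_nat_add_iff (f := fun j => (σ (i / b ^ j % b) : ℝ) / b ^ (j + 1)) n).1 htail
  rw [Sperm, hsum.tsum_eq, sum_range_div_pow_eq_digitRev (by omega), ← add_div, add_comm]

theorem abs_natCeil_sub_sub_le_one {a δ : ℝ} (ha : 0 ≤ a) (hδ : δ ∈ Set.Icc 0 1) :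
    |(⌈a - δ⌉₊ : ℝ) - a| ≤ 1 := by
  have hlow := Nat.le_ceil (a - δ)
  have hup : (⌈a - δ⌉₊ : ℝ) ≤ ⌈a⌉₊ := by
    exact_mod_cast Nat.ceil_mono (sub_le_self a hδ.1)
  have := Nat.ceil_lt_add_one ha
  rw [abs_le]
  constructor <;> linarith [hδ.2]

theorem dist_localDisc_gridDisc_le (hb : 1 < b) {N n : ℕ} (hN : N ≤ b ^ n) {t : ℝ} (ht : 0 ≤ t)
    (hδ : (σ 0 : ℝ) / (b - 1) ∈ Set.Icc (0 : ℝ) 1) :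
    dist (localDisc N (Sperm b σ) t) (gridDisc b σ N n ⌈t * b ^ n - σ 0 / (b - 1)⌉₊)
      ≤ N / b ^ n := by
  set δ : ℝ := σ 0 / (b - 1)
  have hpow : (0 : ℝ) < b ^ n := by positivity
  have hcount : {i ∈ range N | Sperm b σ i < t}
      = {i ∈ range N | digitRev b σ n i < ⌈t * b ^ n - δ⌉₊} := by
    refine filter_congr fun i hi => ?_
    rw [sperm_eq_of_lt_pow hb ((mem_range.1 hi).trans_le hN), Nat.lt_ceil, div_lt_iff₀ hpow,
      lt_sub_iff_add_lt]
  calc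
    _ = |(N / b ^ n : ℝ) * (⌈t * b ^ n - δ⌉₊ - t * b ^ n)| := by
      rw [Real.dist_eq, localDisc, gridDisc, hcount]
      congr 1
      field_simp
      ring
    _ = N / b ^ n * |⌈t * b ^ n - δ⌉₊ - t * b ^ n| := by
      rw [abs_mul, abs_of_nonneg (by positivity)]
    _ ≤ N / b ^ n :=
      mul_le_of_le_one_right (by positivity) (abs_natCeil_sub_sub_le_one (by positivity) hδ)

theorem apply_zero_div_sub_one_mem_Icc (hb : 1 < b) (hσ : Set.MapsTo σ (Set.Iio b) (Set.Iio b)) :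
    (σ 0 : ℝ) / (b - 1) ∈ Set.Icc (0 : ℝ) 1 := by
  have hb₁ : (1 : ℝ) < b := by exact_mod_cast hb
  have hσ₀ : (σ 0 : ℝ) + 1 ≤ b := by
    exact_mod_cast Nat.succ_le_of_lt (hσ (Nat.zero_lt_of_lt hb))
  exact ⟨div_nonneg (by positivity) (by linarith), (div_le_one (by linarith)).2 (by linarith)⟩

theorem dist_diam_localDisc_diam_gridDisc_le (hb : 1 < b)
    (hσ : Set.MapsTo σ (Set.Iio b) (Set.Iio b)) {N n : ℕ} (hN : N ≤ b ^ n) :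
    dist (diam (gridDisc b σ N n '' Set.Iic (b ^ n)))
      (diam (localDisc N (Sperm b σ) '' Set.Icc 0 1)) ≤ 2 * (N / b ^ n) := by
  have hb₀ : 0 < b := by omega
  have hpow : (0 : ℝ) < b ^ n := by positivity
  obtain ⟨hδ₀, hδ₁⟩ := apply_zero_div_sub_one_mem_Icc hb hσ
  have hclose {t : ℝ} (ht : 0 ≤ t) := dist_localDisc_gridDisc_le hb hN ht ⟨hδ₀, hδ₁⟩
  refine dist_diam_le_of_forall_exists_dist_le (by positivity)
    ((Set.finite_Iic _).image _).isBounded isBounded_image_localDisc ?_ ?_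
  · rw [← image_gridDisc_Iio hb₀ hσ]
    rintro _ ⟨h, hh, rfl⟩
    have hh : (h : ℝ) + 1 ≤ b ^ n := by exact_mod_cast Nat.succ_le_of_lt hh
    set t : ℝ := (h + σ 0 / (b - 1)) / b ^ n with ht
    have ht₀ : 0 ≤ t := by positivity
    have ht₁ : t ≤ 1 := (div_le_one hpow).2 (by linarith)
    refine ⟨_, Set.mem_image_of_mem _ ⟨ht₀, ht₁⟩, ?_⟩
    rw [dist_comm]
    convert hclose ht₀
    rw [ht, div_mul_cancel₀ _ hpow.ne', add_sub_cancel_right, Nat.ceil_natCast]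
  · rintro _ ⟨t, ⟨ht₀, ht₁⟩, rfl⟩
    refine ⟨_, Set.mem_image_of_mem _ ?_, hclose ht₀⟩
    rw [Set.mem_Iic, Nat.ceil_le]
    push_cast
    nlinarith

theorem tendsto_diam_sum_phiValues (hb : 1 < b) (hσ : Set.BijOn σ (Set.Iio b) (Set.Iio b))
    (N : ℕ) :
    Tendsto (fun n => diam (∑ j ∈ range n, phiValues b σ N j)) atTop
      (𝓝 (diam (localDisc N (Sperm b σ) '' Set.Icc 0 1))) := by
  have hb₁ : (1 : ℝ) < b := by exact_mod_cast hb
  have herror : Tendsto (fun n : ℕ => 2 * (N / (b : ℝ) ^ n)) atTop (𝓝 0) := by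
    simpa using (tendsto_const_nhds.div_atTop (tendsto_pow_atTop_atTop_of_one_lt hb₁)).const_mul 2
  simp only [← image_gridDisc_eq_sum (Nat.zero_lt_of_lt hb) hσ]
  refine tendsto_iff_dist_tendsto_zero.2
    (squeeze_zero' (Eventually.of_forall fun _ => dist_nonneg) ?_ herror)
  filter_upwards [(tendsto_pow_atTop_atTop_of_one_lt hb).eventually_ge_atTop N] with n hn
  exact dist_diam_localDisc_diam_gridDisc_le hb hσ.mapsTo hn

end Limit

theorem symmetry_lemma_negation (b : ℕ) (hb : 2 ≤ b) (σ : ℕ → ℕ)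
    (hσ : Set.BijOn σ (Set.Iio b) (Set.Iio b)) (N : ℕ) (hN : 1 ≤ N) :
    disc N (Sperm b σ) = disc N (Sperm b fun x => (b - σ x) % b) := by
  have hσ' : Set.BijOn (fun x => (b - σ x) % b) (Set.Iio b) (Set.Iio b) :=
    (bijOn_sub_mod b).comp hσ
  rw [disc_eq_diam_div (by omega), disc_eq_diam_div (by omega)]
  congr 1
  refine tendsto_nhds_unique (tendsto_diam_sum_phiValues hb hσ N) ?_
  simpa only [diam_sum_phiValues_neg (Nat.zero_lt_of_lt hb) hσ.mapsTo]
    using tendsto_diam_sum_phiValues hb hσ' N
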